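/- arXiv:2409.10557 — 4 statements merged into one kernel-verified Lean document; each statement's English description precedes it below -/
import Mathlib

section
/- For every commutative ring S there exists a faithfully flat S-algebra T with the following property: every faithfully flat T-algebra R that is countably presented admits a T-algebra homomorphism R → T (equivalently, the faithfully flat cover T → R splits as T-algebras). -/
universe u

open TensorProduct

/-- A commutative `A`-algebra `B` is faithfully flat if it is flat as an `A`-module and,
for every `A`-module `M`, the vanishing of `M ⊗[A] B` implies the vanishing of `M`. -/
def FaithfullyFlatAlgebra (A B : Type u) [CommRing A] [CommRing B] [Algebra A B] : Prop :=
  Module.Flat A B ∧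
    ∀ (M : Type u) [AddCommGroup M] [Module A M],
      Subsingleton (M ⊗[A] B) → Subsingleton M

/-- A commutative `T`-algebra `R` is countably presented if there is a surjective `T`-algebra
homomorphism from the polynomial algebra `T[X₀, X₁, …]` in countably many variables onto `R`
whose kernel is generated, as an ideal, by a countable set. -/
def CountablyPresentedAlgebra (T R : Type u) [CommRing T] [CommRing R] [Algebra T R] : Prop :=
  ∃ f : MvPolynomial ℕ T →ₐ[T] R, Function.Surjective f ∧
    ∃ s : Set (MvPolynomial ℕ T), s.Countable ∧ Ideal.span s = RingHom.ker f


namespace FFSplit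

/-- The bundled predicate agrees with Mathlib's `Module.FaithfullyFlat`. -/
lemma ff_iff (A B : Type u) [CommRing A] [CommRing B] [Algebra A B] :
    FaithfullyFlatAlgebra A B ↔ Module.FaithfullyFlat A B :=
  (Module.FaithfullyFlat.iff_flat_and_rTensor_reflects_triviality A B).symm

lemma exists_fin_of_mem_smul_top {A B : Type u} [CommRing A] [AddCommGroup B] [Module A B]
    (I : Ideal A) (x : B) (hx : x ∈ I • (⊤ : Submodule A B)) :
    ∃ (n : ℕ) (a : Fin n → A) (b : Fin n → B), (∀ k, a k ∈ I) ∧ ∑ k, a k • b k = x := by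
  have h : (⊤ : Submodule A B) = Submodule.span A (Set.range (id : B → B)) := by simp
  rw [h, Submodule.mem_ideal_smul_span_iff_exists_sum] at hx
  obtain ⟨a, ha, hs⟩ := hx
  refine ⟨a.support.card, fun k => a (a.support.equivFin.symm k),
    fun k => (a.support.equivFin.symm k : B), fun k => ha _, ?_⟩
  rw [← hs, Finsupp.sum, ← Finset.sum_coe_sort a.support]
  exact Equiv.sum_comp a.support.equivFin.symm (fun i : a.support => a i • (i : B))

/-- Local criterion for faithful flatness: every linear relation `∑ a k * b k = c`, with `c` a
natural number, comes from such a relation over a faithfully flat ring map. -/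
lemma ff_of_local {A B : Type u} [CommRing A] [CommRing B] (φ : A →+* B)
    (H : ∀ (n : ℕ) (a : Fin n → A) (b : Fin n → B) (c : ℕ), ∑ k, φ (a k) * b k = c →
      ∃ (A' B' : Type u) (_ : CommRing A') (_ : CommRing B') (φ' : A' →+* B')
        (f : A' →+* A) (g : B' →+* B) (a' : Fin n → A') (b' : Fin n → B'),
        φ'.FaithfullyFlat ∧ (∀ x, g (φ' x) = φ (f x)) ∧ (∀ k, f (a' k) = a k) ∧
          (∀ k, g (b' k) = b k) ∧ ∑ k, φ' (a' k) * b' k = c) :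
    φ.FaithfullyFlat := by
  algebraize [φ]
  change Module.FaithfullyFlat A B
  rw [Module.FaithfullyFlat.iff_flat_and_ideal_smul_eq_top]
  constructor
  · apply Module.Flat.of_forall_isTrivialRelation
    intro l a b h
    simp only [Algebra.smul_def] at h
    obtain ⟨A', B', _, _, φ', f, g, a', b', hff, hg, ha, hb, hs⟩ := H l a b 0
      (by rw [Nat.cast_zero]; exact h)
    rw [Nat.cast_zero] at hs
    algebraize [φ']
    have : Module.FaithfullyFlat A' B' := hff
    obtain ⟨k, α, y, h1, h2⟩ := Module.Flat.isTrivialRelation_of_sum_smul_eq_zero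
      (R := A') (M := B') (f := a') (x := b') (by simp only [Algebra.smul_def]; exact hs)
    refine ⟨k, fun i j => f (α i j), fun j => g (y j), fun i => ?_, fun j => ?_⟩
    · rw [← hb, h1, map_sum]
      refine Finset.sum_congr rfl fun j _ => ?_
      rw [Algebra.smul_def, Algebra.smul_def, map_mul]
      congr 1
      exact hg _
    · have := congrArg f (h2 j)
      simpa [ha] using this
  · intro I hI
    obtain ⟨n, a, b, haI, hab⟩ := exists_fin_of_mem_smul_top I (1 : B)
      (hI.symm ▸ Submodule.mem_top)
    simp only [Algebra.smul_def] at hab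
    obtain ⟨A', B', _, _, φ', f, g, a', b', hff, hg, ha, hb, hs⟩ := H n a b 1
      (by rw [Nat.cast_one]; exact hab)
    rw [Nat.cast_one] at hs
    algebraize [φ']
    have : Module.FaithfullyFlat A' B' := hff
    have htop := ((Module.FaithfullyFlat.iff_flat_and_ideal_smul_eq_top A' B').1 this).2
      (I.comap f) (by
        have h1 : (1 : B') ∈ (I.comap f).map (algebraMap A' B') := by
          rw [← hs]
          refine Ideal.sum_mem _ fun k _ => Ideal.mul_mem_right _ _ ?_
          exact Ideal.mem_map_of_mem _ (by rw [Ideal.mem_comap, ha]; exact haI k)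
        rw [Ideal.smul_top_eq_map, (Ideal.eq_top_iff_one _).2 h1]
        rfl)
    rw [Ideal.eq_top_iff_one, Ideal.mem_comap, map_one] at htop
    exact (Ideal.eq_top_iff_one _).2 htop

/-- Faithful flatness descends along faithfully flat base change. -/
lemma ff_descent (A T Q : Type u) [CommRing A] [CommRing T] [CommRing Q] [Algebra A T] [Algebra A Q]
    [Module.FaithfullyFlat A T] [Module.FaithfullyFlat T (T ⊗[A] Q)] :
    Module.FaithfullyFlat A Q := by
  have hfl : Module.Flat A Q := Module.Flat.of_flat_tensorProduct A Q T
  rw [Module.FaithfullyFlat.iff_flat_and_proper_ideal]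
  refine ⟨hfl, fun I hI => ?_⟩
  rw [← (TensorProduct.isBaseChange A Q T).map_smul_top_ne_top_iff_of_faithfullyFlat]
  apply ((Module.FaithfullyFlat.iff_flat_and_proper_ideal T (T ⊗[A] Q)).1 inferInstance).2
  intro h
  apply hI
  have := Ideal.comap_map_eq_self_of_faithfullyFlat (B := T) I
  rw [← this, h, Ideal.comap_top]

/-- The relations defining countably presented faithfully flat covers of `A`. -/
def Cover (A : Type u) [CommRing A] : Type u :=
  {s : ℕ → MvPolynomial ℕ A //
    Module.FaithfullyFlat A (MvPolynomial ℕ A ⧸ Ideal.span (Set.range s))}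

/-- The algebra presented by a cover. -/
abbrev Cover.Alg {A : Type u} [CommRing A] (i : Cover A) : Type u :=
  MvPolynomial ℕ A ⧸ Ideal.span (Set.range i.1)

/-- The relations of all covers, in disjoint sets of variables. -/
noncomputable def rels (A : Type u) [CommRing A] (p : Cover A × ℕ) :
    MvPolynomial (Cover A × ℕ) A :=
  MvPolynomial.rename (fun n => (p.1, n)) (p.1.1 p.2)

/-- The tensor product over `A` of all countably presented faithfully flat covers. -/
abbrev Succ (A : Type u) [CommRing A] : Type u :=
  MvPolynomial (Cover A × ℕ) A ⧸ Ideal.span (Set.range (rels A))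

/-- The canonical map from a cover to the tensor product. -/
noncomputable def Cover.toSucc {A : Type u} [CommRing A] (i : Cover A) : i.Alg →ₐ[A] Succ A :=
  Ideal.Quotient.liftₐ _ ((Ideal.Quotient.mkₐ A _).comp (MvPolynomial.rename (fun n => (i, n))))
    (by
      intro a ha
      rw [← RingHom.mem_ker]
      refine (Ideal.span_le.2 ?_ : Ideal.span (Set.range i.1) ≤ _) ha
      rintro _ ⟨n, rfl⟩
      rw [SetLike.mem_coe, RingHom.mem_ker]
      exact Ideal.Quotient.eq_zero_iff_mem.2 (Ideal.subset_span ⟨(i, n), rfl⟩))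

lemma Cover.toSucc_X {A : Type u} [CommRing A] (i : Cover A) (n : ℕ) :
    i.toSucc (Ideal.Quotient.mk _ (MvPolynomial.X n)) =
      Ideal.Quotient.mk _ (MvPolynomial.X (i, n)) := by
  refine (Ideal.Quotient.lift_mk _ _ _).trans ?_
  simp

lemma exists_finite_stage {A : Type u} [CommRing A] (F : Finset (Cover A)) :
    ∃ (B : Type u) (_ : CommRing B) (_ : Algebra A B) (g : B →ₐ[A] Succ A)
      (h : MvPolynomial (Cover A × ℕ) A →ₐ[A] B), Module.FaithfullyFlat A B ∧
      (∀ i ∈ F, ∀ n, g (h (MvPolynomial.X (i, n))) =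
        Ideal.Quotient.mk _ (MvPolynomial.X (i, n))) ∧
      (∀ i ∈ F, ∀ n, h (rels A (i, n)) = 0) := by
  classical
  induction F using Finset.induction_on with
  | empty => exact ⟨A, inferInstance, inferInstance, Algebra.ofId _ _, MvPolynomial.aeval 0,
      inferInstance, by simp, by simp⟩
  | insert i F hi ih =>
    obtain ⟨B, _, _, g, h, hff, h1, h2⟩ := ih
    have := i.2
    have hI : Module.FaithfullyFlat A i.Alg := i.2
    let h' : MvPolynomial (Cover A × ℕ) A →ₐ[A] B ⊗[A] i.Alg :=
      MvPolynomial.aeval fun p => if p.1 = i then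
        Algebra.TensorProduct.includeRight (Ideal.Quotient.mk _ (MvPolynomial.X p.2) : i.Alg)
        else Algebra.TensorProduct.includeLeft (S := A) (h (MvPolynomial.X p))
    have key1 : h'.comp (MvPolynomial.rename (fun n => (i, n))) =
        (Algebra.TensorProduct.includeRight).comp (Ideal.Quotient.mkₐ A _) := by
      ext n
      simp [h']
    have key2 (j : Cover A) (hj : j ≠ i) : h'.comp (MvPolynomial.rename (fun n => (j, n))) =
        (Algebra.TensorProduct.includeLeft (S := A)).comp
          (h.comp (MvPolynomial.rename (fun n => (j, n)))) := by
      ext n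
      simp [h', hj]
    refine ⟨B ⊗[A] i.Alg, inferInstance, inferInstance,
      Algebra.TensorProduct.lift g i.toSucc (fun _ _ => Commute.all _ _), h', ?_, ?_, ?_⟩
    · exact Module.FaithfullyFlat.trans A B _
    · intro j hj n
      by_cases hji : j = i
      · subst hji
        have e : j.toSucc (Ideal.Quotient.mk _ (MvPolynomial.X n)) =
            Ideal.Quotient.mk _ (MvPolynomial.X (j, n)) := Cover.toSucc_X j n
        simp [h', e]
      · have := h1 j (Finset.mem_of_mem_insert_of_ne hj hji) n
        simp [h', hji, this]
    · intro j hj n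
      by_cases hji : j = i
      · subst hji
        have := DFunLike.congr_fun key1 (j.1 n)
        refine this.trans ?_
        simp only [AlgHom.comp_apply, Ideal.Quotient.mkₐ_eq_mk]
        have h0 : Ideal.Quotient.mk (Ideal.span (Set.range j.1)) (j.1 n) = 0 :=
          Ideal.Quotient.eq_zero_iff_mem.2 (Ideal.subset_span ⟨n, rfl⟩)
        rw [h0, map_zero]
      · refine (DFunLike.congr_fun (key2 j hji) (j.1 n)).trans ?_
        have := h2 j (Finset.mem_of_mem_insert_of_ne hj hji) n
        simp only [AlgHom.comp_apply]
        rw [show h (MvPolynomial.rename (fun n => (j, n)) (j.1 n)) = 0 from this, map_zero]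

lemma succ_ff (A : Type u) [CommRing A] : (algebraMap A (Succ A)).FaithfullyFlat := by
  classical
  apply ff_of_local
  intro n a b c hs
  choose p hp using fun k => Ideal.Quotient.mk_surjective (b k)
  have hmem : ∑ k, MvPolynomial.C (a k) * p k - (c : MvPolynomial (Cover A × ℕ) A) ∈
      Ideal.span (Set.range (rels A)) := by
    rw [← Ideal.Quotient.eq_zero_iff_mem, map_sub, map_sum, sub_eq_zero, map_natCast, ← hs]
    refine Finset.sum_congr rfl fun k _ => ?_
    rw [map_mul, hp]
    rfl
  obtain ⟨t, ht, hmem'⟩ := Submodule.mem_span_finite_of_mem_span hmem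
  choose q hq using fun x : t => ht x.2
  obtain ⟨B, _, _, g, h, hff, h1, h2⟩ := exists_finite_stage
    (t.attach.image (fun x => (q x).1) ∪ Finset.univ.biUnion fun k => (p k).vars.image Prod.fst)
  refine ⟨A, B, inferInstance, inferInstance, algebraMap A B, RingHom.id A, g.toRingHom, a,
    fun k => h (p k), ?_, ?_, fun _ => rfl, ?_, ?_⟩
  · rwa [RingHom.faithfullyFlat_algebraMap_iff]
  · intro x
    simp
  · intro k
    rw [← hp k]
    have e : (g.comp h : _ →ₐ[A] _) (p k) = (Ideal.Quotient.mkₐ A _ : _ →ₐ[A] Succ A) (p k) := by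
      refine MvPolynomial.hom_congr_vars (f₁ := (g.comp h).toRingHom)
        (f₂ := (Ideal.Quotient.mkₐ A (Ideal.span (Set.range (rels A)))).toRingHom) ?_ ?_ rfl
      · ext x
        simp
        rfl
      · rintro ⟨i, m⟩ hi _
        refine h1 i ?_ m
        refine Finset.mem_union_right _ (Finset.mem_biUnion.2 ⟨k, Finset.mem_univ _, ?_⟩)
        exact Finset.mem_image.2 ⟨_, hi, rfl⟩
    exact e
  · have hle : Submodule.span (MvPolynomial (Cover A × ℕ) A) (t : Set _) ≤ RingHom.ker h := by
      rw [Submodule.span_le]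
      intro x hx
      have hx' := hq ⟨x, hx⟩
      change rels A _ = x at hx'
      rw [SetLike.mem_coe, RingHom.mem_ker, ← hx']
      exact h2 _ (Finset.mem_union_left _ (Finset.mem_image_of_mem _ (Finset.mem_attach t ⟨x, hx⟩))) _
    have := hle hmem'
    rw [RingHom.mem_ker, map_sub, map_sum, sub_eq_zero, map_natCast] at this
    rw [← this]
    refine Finset.sum_congr rfl fun k _ => ?_
    rw [map_mul]
    congr 1
    exact (h.commutes (a k)).symm

end FFSplit

namespace FFSplit

open CategoryTheory Limits SmallObject

/-- Faithfully flat morphisms of commutative rings. -/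
def W : MorphismProperty CommRingCat.{u} := fun _ _ f => f.hom.FaithfullyFlat

instance : W.{u}.IsMultiplicative where
  id_mem _ := RingHom.FaithfullyFlat.of_bijective Function.bijective_id
  comp_mem _ _ hf hg := RingHom.FaithfullyFlat.stableUnderComposition _ _ hf hg

instance : W.{u}.RespectsIso :=
  MorphismProperty.RespectsIso.mk _
    (fun e _ hf => W.comp_mem _ _ (RingHom.FaithfullyFlat.of_bijective
      e.commRingCatIsoToRingEquiv.bijective) hf)
    (fun e _ hf => W.comp_mem _ _ hf (RingHom.FaithfullyFlat.of_bijective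
      e.commRingCatIsoToRingEquiv.bijective))

/-- A finite family of elements of a filtered colimit comes from any late enough stage. -/
lemma exists_lift_fin {J : Type u} [SmallCategory J] [IsFiltered J] {X : J ⥤ CommRingCat.{u}}
    {c : Cocone X} (hc : IsColimit c) (n : ℕ) (a : Fin n → c.pt) :
    ∃ (j : J) (a' : Fin n → X.obj j), ∀ k, c.ι.app j (a' k) = a k := by
  choose i y hy using fun k => Concrete.isColimit_exists_rep X hc (a k)
  classical
  obtain ⟨j, hj⟩ := IsFiltered.sup_objs_exists (Finset.univ.image i)
  have f := fun k => hj (Finset.mem_image_of_mem i (Finset.mem_univ k))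
  refine ⟨j, fun k => X.map (f k).some (y k), fun k => ?_⟩
  rw [← hy k, ← c.w (f k).some]
  rfl

instance : MorphismProperty.IsStableUnderFilteredColimits.{u, u} W.{u} where
  isStableUnderColimitsOfShape J _ _ := ⟨by
    intro X₁ X₂ c₁ c₂ h₁ h₂ f hf φ hφ
    have hφ' : ∀ j (x : X₁.obj j), φ (c₁.ι.app j x) = c₂.ι.app j (f.app j x) := fun j x =>
      congrArg (fun g => g.hom x) (hφ j)
    apply ff_of_local
    intro n a b c hs
    obtain ⟨j₁, a₁, ha₁⟩ := exists_lift_fin h₁ n a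
    obtain ⟨j₂, b₂, hb₂⟩ := exists_lift_fin h₂ n b
    let j := IsFiltered.max j₁ j₂
    let a₃ : Fin n → X₁.obj j := fun k => X₁.map (IsFiltered.leftToMax j₁ j₂) (a₁ k)
    let b₃ : Fin n → X₂.obj j := fun k => X₂.map (IsFiltered.rightToMax j₁ j₂) (b₂ k)
    have ha₃ : ∀ k, c₁.ι.app j (a₃ k) = a k := fun k => by
      rw [← ha₁ k, ← c₁.w (IsFiltered.leftToMax j₁ j₂)]
      rfl
    have hb₃ : ∀ k, c₂.ι.app j (b₃ k) = b k := fun k => by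
      rw [← hb₂ k, ← c₂.w (IsFiltered.rightToMax j₁ j₂)]
      rfl
    have heq : c₂.ι.app j (∑ k, f.app j (a₃ k) * b₃ k) = c₂.ι.app j (c : X₂.obj j) := by
      rw [map_sum, map_natCast, ← hs]
      refine Finset.sum_congr rfl fun k _ => ?_
      rw [map_mul, hb₃, ← hφ', ha₃]
    obtain ⟨l, u, v, huv⟩ := Concrete.isColimit_exists_of_rep_eq X₂ h₂ _ _ heq
    obtain ⟨m, w, hw⟩ : ∃ (m : J) (w : l ⟶ m), u ≫ w = v ≫ w :=
      ⟨_, IsFiltered.coeqHom u v, IsFiltered.coeq_condition u v⟩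
    have huv' : X₂.map (u ≫ w) (∑ k, f.app j (a₃ k) * b₃ k) =
        X₂.map (u ≫ w) (c : X₂.obj j) := by
      conv_rhs => rw [hw]
      rw [Functor.map_comp, Functor.map_comp]
      exact congrArg (X₂.map w) huv
    refine ⟨X₁.obj m, X₂.obj m, inferInstance, inferInstance, (f.app m).hom, (c₁.ι.app m).hom,
      (c₂.ι.app m).hom, fun k => X₁.map (u ≫ w) (a₃ k), fun k => X₂.map (u ≫ w) (b₃ k),
      hf m, fun x => (hφ' m x).symm, fun k => ?_, fun k => ?_, ?_⟩
    · rw [← ha₃ k, ← c₁.w (u ≫ w)]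
      rfl
    · rw [← hb₃ k, ← c₂.w (u ≫ w)]
      rfl
    · rw [map_natCast, map_sum] at huv'
      rw [← huv']
      refine Finset.sum_congr rfl fun k _ => ?_
      rw [map_mul]
      congr 1
      exact congrArg (fun g => g.hom (a₃ k)) (f.naturality (u ≫ w))⟩

/-- Adjoin splittings of all countably presented faithfully flat covers. -/
noncomputable def Φ (S : Type u) [CommRing S] : SuccStruct CommRingCat.{u} where
  X₀ := .of S
  succ A := .of (Succ A)
  toSucc A := CommRingCat.ofHom (algebraMap A (Succ A))

lemma prop_le (S : Type u) [CommRing S] : (Φ S).prop ≤ W := by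
  intro A B f hf
  cases hf
  exact succ_ff _

/-- A polynomial over a directed colimit lifts to some stage. -/
lemma exists_lift_poly {J : Type u} [LinearOrder J] [Nonempty J] {X : J ⥤ CommRingCat.{u}}
    {c : Cocone X} (hc : IsColimit c) (p : MvPolynomial ℕ c.pt) :
    ∃ (j : J) (q : MvPolynomial ℕ (X.obj j)), MvPolynomial.map (c.ι.app j).hom q = p := by
  have up : ∀ {i j : J} (h : i ≤ j) (q : MvPolynomial ℕ (X.obj i)),
      MvPolynomial.map (c.ι.app j).hom (MvPolynomial.map (X.map (homOfLE h)).hom q) =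
        MvPolynomial.map (c.ι.app i).hom q := by
    intro i j h q
    rw [MvPolynomial.map_map, ← CommRingCat.hom_comp, c.w]
  induction p using MvPolynomial.induction_on with
  | C a =>
    obtain ⟨j, y, hy⟩ := Concrete.isColimit_exists_rep X hc a
    refine ⟨j, MvPolynomial.C y, ?_⟩
    rw [MvPolynomial.map_C]
    exact congrArg _ hy
  | add p q hp hq =>
    obtain ⟨i, p', rfl⟩ := hp
    obtain ⟨j, q', rfl⟩ := hq
    refine ⟨max i j, MvPolynomial.map (X.map (homOfLE (le_max_left i j))).hom p' +
      MvPolynomial.map (X.map (homOfLE (le_max_right i j))).hom q', ?_⟩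
    rw [map_add, up, up]
  | mul_X p n hp =>
    obtain ⟨i, p', rfl⟩ := hp
    exact ⟨i, p' * MvPolynomial.X n, by simp⟩

lemma exists_lift_seq {J : Type u} [LinearOrder J] [Nonempty J]
    (hJ : ∀ s : ℕ → J, ∃ j, ∀ n, s n ≤ j) {X : J ⥤ CommRingCat.{u}}
    {c : Cocone X} (hc : IsColimit c) (p : ℕ → MvPolynomial ℕ c.pt) :
    ∃ (j : J) (q : ℕ → MvPolynomial ℕ (X.obj j)),
      ∀ n, MvPolynomial.map (c.ι.app j).hom (q n) = p n := by
  choose i q hq using fun n => exists_lift_poly hc (p n)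
  obtain ⟨j, hj⟩ := hJ i
  refine ⟨j, fun n => MvPolynomial.map (X.map (homOfLE (hj n))).hom (q n), fun n => ?_⟩
  rw [MvPolynomial.map_map, ← CommRingCat.hom_comp, c.w, hq]

/-- Splitting a countably presented cover of `T` which is defined over `A`, when all covers of `A`
split over `T`. -/
lemma split_of_lift (A T R : Type u) [CommRing A] [CommRing T] [CommRing R] [Algebra A T]
    [Algebra T R] [Module.FaithfullyFlat A T] [Module.FaithfullyFlat T R]
    (g : Succ A →ₐ[A] T) (f : MvPolynomial ℕ T →ₐ[T] R) (hf : Function.Surjective f)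
    (s : ℕ → MvPolynomial ℕ A)
    (hs : Ideal.span (Set.range fun n => MvPolynomial.map (algebraMap A T) (s n)) =
      RingHom.ker f) :
    Nonempty (R →ₐ[T] T) := by
  let Q := MvPolynomial ℕ A ⧸ Ideal.span (Set.range s)
  letI : Algebra A R := ((algebraMap T R).comp (algebraMap A T)).toAlgebra
  haveI : IsScalarTower A T R := IsScalarTower.of_algebraMap_eq fun _ => rfl
  -- homomorphisms out of `R`
  have desc : ∀ (B : Type u) [CommRing B] [Algebra T B] [Algebra A B] [IsScalarTower A T B]
      (h : Q →ₐ[A] B), ∃ k : R →ₐ[T] B, ∀ n, k (f (MvPolynomial.X n)) =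
        h (Ideal.Quotient.mk _ (MvPolynomial.X n)) := by
    intro B _ _ _ _ h
    let k₀ : MvPolynomial ℕ T →ₐ[T] B :=
      MvPolynomial.aeval fun n => h (Ideal.Quotient.mk _ (MvPolynomial.X n))
    have e : ∀ p : MvPolynomial ℕ A, k₀ (MvPolynomial.map (algebraMap A T) p) =
        h (Ideal.Quotient.mk _ p) := by
      intro p
      have : (MvPolynomial.aeval fun n => h (Ideal.Quotient.mk _ (MvPolynomial.X n))) =
          h.comp (Ideal.Quotient.mkₐ A (Ideal.span (Set.range s))) := by
        ext n
        simp
        rfl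
      refine Eq.trans ?_ (DFunLike.congr_fun this p)
      exact MvPolynomial.aeval_map_algebraMap _ _ _
    have hk : RingHom.ker f ≤ RingHom.ker k₀ := by
      rw [← hs, Ideal.span_le]
      rintro _ ⟨n, rfl⟩
      have h0 : Ideal.Quotient.mk (Ideal.span (Set.range s)) (s n) = 0 :=
        Ideal.Quotient.eq_zero_iff_mem.2 (Ideal.subset_span ⟨n, rfl⟩)
      rw [SetLike.mem_coe, RingHom.mem_ker, e, h0, map_zero]
    refine ⟨(Ideal.Quotient.liftₐ (RingHom.ker f) k₀ fun a ha => hk ha).comp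
      (Ideal.quotientKerAlgEquivOfSurjective hf).symm.toAlgHom, fun n => ?_⟩
    have : (Ideal.quotientKerAlgEquivOfSurjective hf).symm (f (MvPolynomial.X n)) =
        Ideal.Quotient.mk _ (MvPolynomial.X n) := by
      rw [AlgEquiv.symm_apply_eq]
      rfl
    refine (congrArg (Ideal.Quotient.liftₐ (RingHom.ker f) k₀ fun a ha => hk ha) this).trans ?_
    refine (Ideal.Quotient.lift_mk _ _ _).trans ?_
    simp [k₀]
  -- the map `Q → R`
  let q₀ : MvPolynomial ℕ A →ₐ[A] R := (f.restrictScalars A).comp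
    (MvPolynomial.mapAlgHom (Algebra.ofId A T))
  have hq₀ : ∀ a ∈ Ideal.span (Set.range s), q₀ a = 0 := by
    intro a ha
    rw [← RingHom.mem_ker]
    refine (Ideal.span_le.2 ?_ : Ideal.span (Set.range s) ≤ _) ha
    rintro _ ⟨n, rfl⟩
    rw [SetLike.mem_coe, RingHom.mem_ker]
    change MvPolynomial.map (algebraMap A T) (s n) ∈ RingHom.ker f
    rw [← hs]
    exact Ideal.subset_span ⟨n, rfl⟩
  let q : Q →ₐ[A] R := Ideal.Quotient.liftₐ _ q₀ hq₀
  have hqX : ∀ n, q (Ideal.Quotient.mk _ (MvPolynomial.X n)) = f (MvPolynomial.X n) := by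
    intro n
    refine (Ideal.Quotient.lift_mk _ _ _).trans ?_
    simp [q₀]
  -- `R` is the base change of `Q`
  obtain ⟨k, hk⟩ := desc (T ⊗[A] Q) Algebra.TensorProduct.includeRight
  let l : T ⊗[A] Q →ₐ[T] R :=
    Algebra.TensorProduct.lift (Algebra.ofId T R) q (fun _ _ => Commute.all _ _)
  have hlk : l.comp k = AlgHom.id T R := by
    rw [← AlgHom.cancel_right hf]
    ext n
    simp [hk, l, hqX]
  have hkl : k.comp l = AlgHom.id T _ := by
    apply Algebra.TensorProduct.ext
    · ext
    · apply Ideal.Quotient.algHom_ext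
      ext n
      simp [l, hqX, hk]
  have : Module.FaithfullyFlat T (T ⊗[A] Q) :=
    Module.FaithfullyFlat.of_linearEquiv T R (AlgEquiv.ofAlgHom l k hlk hkl).toLinearEquiv
  have hQ : Module.FaithfullyFlat A Q := ff_descent A T Q
  obtain ⟨r, -⟩ := desc T (g.comp (Cover.toSucc ⟨s, hQ⟩))
  exact ⟨r⟩

theorem main (S : Type u) [CommRing S] :
    ∃ (T : Type u) (_ : CommRing T) (_ : Algebra S T),
      FaithfullyFlatAlgebra S T ∧
        ∀ (R : Type u) (_ : CommRing R) (_ : Algebra T R),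
          FaithfullyFlatAlgebra T R → CountablyPresentedAlgebra T R →
            Nonempty (R →ₐ[T] T) := by
  let κ : Cardinal.{u} := Cardinal.aleph 1
  have hκ : κ.IsRegular := Cardinal.isRegular_aleph_one
  haveI : Fact κ.IsRegular := ⟨hκ⟩
  let J := κ.ord.ToType
  haveI : Nonempty J := by simpa [J] using hκ.ne_zero
  letI : OrderBot J := WellFoundedLT.toOrderBot J
  letI : SuccOrder J := SuccOrder.ofLinearWellFoundedLT J
  haveI : NoMaxOrder J := Cardinal.noMaxOrder hκ.aleph0_le
  have hJ : ∀ s : ℕ → J, ∃ j, ∀ n, s n ≤ j := by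
    intro s
    let s' : ULift.{u} ℕ → J := fun n => s n.down
    have hlt : HasCardinalLT (ULift.{u} ℕ) κ := by
      rw [hasCardinalLT_iff_cardinal_mk_lt]
      simp [κ]
    exact ⟨IsCardinalFiltered.max s' hlt, fun n =>
      leOfHom (IsCardinalFiltered.toMax s' hlt ⟨n⟩)⟩
  let tc := ((Φ S).transfiniteCompositionOfShapeιIteration J).ofLE (prop_le S)
  let T : CommRingCat.{u} := (Φ S).iteration J
  letI algST : Algebra S T := ((Φ S).ιIteration J).hom.toAlgebra
  refine ⟨T, inferInstance, algST, ?_, ?_⟩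
  · rw [ff_iff]
    exact W.transfiniteCompositionsOfShape_le J _ tc.mem
  · intro R _ _ hR ⟨f, hf, s, hsc, hs⟩
    rw [ff_iff] at hR
    obtain ⟨p, hp⟩ := (hsc.insert 0).exists_eq_range (Set.insert_nonempty _ _)
    obtain ⟨j, q, hq⟩ := exists_lift_seq hJ tc.isColimit p
    letI : Algebra (tc.F.obj j) T := (tc.incl.app j).hom.toAlgebra
    haveI : Module.FaithfullyFlat (tc.F.obj j) T := tc.mem_incl_app j
    have hj : ¬ IsMax j := not_isMax j
    let g₀ : (Φ S).succ (tc.F.obj j) ⟶ T :=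
      ((Φ S).iterationFunctorObjSuccIso j hj).inv ≫ tc.incl.app (Order.succ j)
    have hg₀ : (Φ S).toSucc (tc.F.obj j) ≫ g₀ = tc.incl.app j := by
      have h1 := (Φ S).iterationFunctor_map_succ j hj
      exact (Category.assoc _ _ _).symm.trans ((congrArg (· ≫ _) h1.symm).trans
        (((Φ S).iterationCocone J).w (homOfLE (Order.le_succ j))))
    let g : Succ (tc.F.obj j) →ₐ[tc.F.obj j] T :=
      { g₀.hom with commutes' := fun x => congrArg (fun h => h.hom x) hg₀ }
    refine split_of_lift (tc.F.obj j) T R g f hf q ?_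
    have hsp : Ideal.span s = Ideal.span (Set.range p) := by rw [← hp, Ideal.span_insert_zero]
    rw [← hs, hsp]
    congr 2
    exact funext hq

end FFSplit

/-- For every commutative ring `S` there exists a faithfully flat `S`-algebra `T` such that
every countably presented faithfully flat `T`-algebra `R` admits a `T`-algebra homomorphism
`R → T` (i.e. the cover `T → R` splits). -/
theorem exists_faithfullyFlat_with_splitting_of_countably_presented_covers
    (S : Type u) [CommRing S] :
    ∃ (T : Type u) (_ : CommRing T) (_ : Algebra S T),
      FaithfullyFlatAlgebra S T ∧
        ∀ (R : Type u) (_ : CommRing R) (_ : Algebra T R),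
          FaithfullyFlatAlgebra T R → CountablyPresentedAlgebra T R →
            Nonempty (R →ₐ[T] T) := by
  exact FFSplit.main S
end

section
/- Let A be a commutative ring, let a, b ∈ A, and let M be an A-module. Write M_a, M_b, M_{ab} for the localizations of M at the multiplicative sets of powers of a, of b, and of a·b, respectively. Assume: (i) a is a nonzerodivisor on M, i.e. a·m = 0 implies m = 0 for m ∈ M; and (ii) the sequence 0 → M → M_a ⊕ M_b → M_{ab} is exact in the middle, i.e. whenever u ∈ M_a and v ∈ M_b have the same image in M_{ab}, there exists x ∈ M whose image in M_a is u and whose image in M_b is v. Then the quotient M/aM has no b-torsion: for all m, m' ∈ M with b·m = a·m', one has m ∈ aM. -/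
/-- Let `A` be a commutative ring, `a, b ∈ A`, and `M` an `A`-module.  Write `M_a`, `M_b`,
`M_{ab}` for the localizations of `M` at the powers of `a`, `b` and `a·b` respectively, and
let `φa : M_a → M_{ab}`, `φb : M_b → M_{ab}` be the canonical maps (characterized by the fact
that they commute with the localization maps from `M`).  Assume that `a` is a nonzerodivisor
on `M` and that the sequence `0 → M → M_a ⊕ M_b → M_{ab}` is exact in the middle: whenever
`u ∈ M_a` and `v ∈ M_b` have the same image in `M_{ab}`, there is `x ∈ M` mapping to `u` and
to `v`.  Then `M/aM` has no `b`-torsion: if `b·m = a·m'` then `m ∈ aM`. -/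
theorem no_b_torsion_mod_a {A : Type*} [CommRing A] (a b : A)
    (M : Type*) [AddCommGroup M] [Module A M]
    (φa : LocalizedModule (Submonoid.powers a) M →ₗ[A]
      LocalizedModule (Submonoid.powers (a * b)) M)
    (φb : LocalizedModule (Submonoid.powers b) M →ₗ[A]
      LocalizedModule (Submonoid.powers (a * b)) M)
    (hφa : ∀ m : M, φa (LocalizedModule.mkLinearMap (Submonoid.powers a) M m)
      = LocalizedModule.mkLinearMap (Submonoid.powers (a * b)) M m)
    (hφb : ∀ m : M, φb (LocalizedModule.mkLinearMap (Submonoid.powers b) M m)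
      = LocalizedModule.mkLinearMap (Submonoid.powers (a * b)) M m)
    (hreg : ∀ m : M, a • m = 0 → m = 0)
    (hexact : ∀ (u : LocalizedModule (Submonoid.powers a) M)
      (v : LocalizedModule (Submonoid.powers b) M), φa u = φb v →
      ∃ x : M, LocalizedModule.mkLinearMap (Submonoid.powers a) M x = u ∧
        LocalizedModule.mkLinearMap (Submonoid.powers b) M x = v) :
    ∀ m m' : M, b • m = a • m' → ∃ m₀ : M, m = a • m₀ := by
  intro m m' h
  obtain ⟨u, hu⟩ : ∃ u : LocalizedModule (Submonoid.powers a) M,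
      a • u = LocalizedModule.mkLinearMap (Submonoid.powers a) M m :=
    ⟨LocalizedModule.mk m ⟨a, Submonoid.mem_powers a⟩, by
      rw [LocalizedModule.smul'_mk, LocalizedModule.mkLinearMap_apply]
      exact LocalizedModule.mk_cancel (⟨a, Submonoid.mem_powers a⟩ : Submonoid.powers a) m⟩
  obtain ⟨v, hv⟩ : ∃ v : LocalizedModule (Submonoid.powers b) M,
      b • v = LocalizedModule.mkLinearMap (Submonoid.powers b) M m' :=
    ⟨LocalizedModule.mk m' ⟨b, Submonoid.mem_powers b⟩, by
      rw [LocalizedModule.smul'_mk, LocalizedModule.mkLinearMap_apply]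
      exact LocalizedModule.mk_cancel (⟨b, Submonoid.mem_powers b⟩ : Submonoid.powers b) m'⟩
  have key : φa u = φb v := by
    apply IsLocalizedModule.smul_injective
      (LocalizedModule.mkLinearMap (Submonoid.powers (a * b)) M)
      ⟨a * b, Submonoid.mem_powers (a * b)⟩
    change (a * b) • φa u = (a * b) • φb v
    have h1 : (a * b) • φa u
        = LocalizedModule.mkLinearMap (Submonoid.powers (a * b)) M (b • m) := by
      rw [mul_smul, smul_comm, ← map_smul φa, hu, hφa, map_smul]
    have h2 : (a * b) • φb v
        = LocalizedModule.mkLinearMap (Submonoid.powers (a * b)) M (a • m') := by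
      rw [mul_smul, ← map_smul φb, hv, hφb, map_smul]
    rw [h1, h2, h]
  obtain ⟨x, hx, -⟩ := hexact u v key
  refine ⟨x, ?_⟩
  have h3 : LocalizedModule.mkLinearMap (Submonoid.powers a) M m
      = LocalizedModule.mkLinearMap (Submonoid.powers a) M (a • x) := by
    rw [map_smul, hx, hu]
  obtain ⟨⟨c, n, hc⟩, h4⟩ := IsLocalizedModule.exists_of_eq (S := Submonoid.powers a) h3
  have hpow : ∀ (n : ℕ) (y : M), a ^ n • y = 0 → y = 0 := by
    intro n
    induction n with
    | zero => intro y hy; simpa using hy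
    | succ k ih =>
      intro y hy
      rw [pow_succ, mul_smul] at hy
      exact hreg y (ih _ hy)
  apply sub_eq_zero.mp
  apply hpow n
  have h5 : c • m = c • (a • x) := h4
  have hc' : a ^ n = c := hc
  rw [hc', smul_sub, h5, sub_self]
end

section
/- Let I be a nonempty directed partially ordered set in which every countable subset has an upper bound, let (R_i)_{i∈I} be a directed system of commutative rings with colimit R, and let A be a commutative R-algebra which is countably presented. Then there exist an index i ∈ I and a countably presented commutative R_i-algebra B together with an isomorphism of R-algebras A ≅ R ⊗_{R_i} B. -/
universe u

open TensorProduct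

/-- If the relations of a countable presentation over `R` come from `T`, the algebra descends
to `T`. -/
theorem descends_of_coeffs (T R A : Type u) [CommRing T] [CommRing R] [CommRing A]
    [Algebra T R] [Algebra R A] (g : MvPolynomial ℕ R →ₐ[R] A) (hg : Function.Surjective g)
    (s : Set (MvPolynomial ℕ R)) (hs : s.Countable) (hspan : Ideal.span s = RingHom.ker g)
    (h : ∀ p ∈ s, ∃ q : MvPolynomial ℕ T, MvPolynomial.map (algebraMap T R) q = p) :
    ∃ (B : Type u) (_ : CommRing B) (_ : Algebra T B),
      CountablyPresentedAlgebra T B ∧ Nonempty (A ≃ₐ[R] (R ⊗[T] B)) := by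
  choose! q hq using h
  let I : Ideal (MvPolynomial ℕ T) := Ideal.span (q '' s)
  refine ⟨MvPolynomial ℕ T ⧸ I, inferInstance, inferInstance,
    ⟨Ideal.Quotient.mkₐ T I, Ideal.Quotient.mkₐ_surjective T I, q '' s, hs.image q,
      (Ideal.Quotient.mkₐ_ker T I).symm⟩, ⟨?_⟩⟩
  let e := MvPolynomial.algebraTensorAlgEquiv (σ := ℕ) T R
  have key : RingHom.ker g = (I.map (Algebra.TensorProduct.includeRight
      (A := R) (R := T))).map (e : R ⊗[T] MvPolynomial ℕ T →+* MvPolynomial ℕ R) := by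
    rw [← hspan, Ideal.map_span, Ideal.map_span, Set.image_image, Set.image_image]
    congr 1
    ext p
    constructor
    · intro hp
      exact ⟨p, hp, by simp [e, hq p hp]⟩
    · rintro ⟨p', hp', rfl⟩
      simpa [e, hq p' hp'] using hp'
  exact (Ideal.quotientKerAlgEquivOfSurjective hg).symm.trans
    ((Ideal.quotientEquivAlg _ _ e key).symm.trans
      (Algebra.TensorProduct.tensorQuotientEquiv (R := T) R (MvPolynomial ℕ T) R I).symm)

/-- Let `ι` be a nonempty directed partially ordered set in which every countable subset has
an upper bound, let `(G i)` be a directed system of commutative rings indexed by `ι` with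
colimit `R`, and let `A` be a countably presented commutative `R`-algebra.  Then there are an
index `i`, a countably presented commutative `G i`-algebra `B`, and an isomorphism of
`R`-algebras `A ≅ R ⊗[G i] B`. -/
theorem countablyPresentedAlgebra_descends
    (ι : Type u) [PartialOrder ι] [IsDirected ι (· ≤ ·)] [Nonempty ι]
    (hcountable : ∀ s : Set ι, s.Countable → ∃ ub : ι, ∀ i ∈ s, i ≤ ub)
    (G : ι → Type u) [∀ i, CommRing (G i)]
    (f : ∀ i j, i ≤ j → G i →+* G j)
    [DirectedSystem G fun i j h => ⇑(f i j h)]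
    (A : Type u) [CommRing A]
    [Algebra (Ring.DirectLimit G fun i j h => ⇑(f i j h)) A]
    (hA : CountablyPresentedAlgebra (Ring.DirectLimit G fun i j h => ⇑(f i j h)) A) :
    ∃ (i : ι) (B : Type u) (_ : CommRing B) (_ : Algebra (G i) B),
      CountablyPresentedAlgebra (G i) B ∧
        letI : Algebra (G i) (Ring.DirectLimit G fun i j h => ⇑(f i j h)) :=
          (Ring.DirectLimit.of G (fun i j h => ⇑(f i j h)) i).toAlgebra
        Nonempty (A ≃ₐ[Ring.DirectLimit G fun i j h => ⇑(f i j h)]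
          ((Ring.DirectLimit G fun i j h => ⇑(f i j h)) ⊗[G i] B)) := by
  obtain ⟨g, hg, s, hs, hspan⟩ := hA
  have hex : ∀ z : Ring.DirectLimit G fun i j h => ⇑(f i j h), ∃ i, ∃ x : G i,
      Ring.DirectLimit.of G (fun i j h => ⇑(f i j h)) i x = z :=
    fun z => Ring.DirectLimit.exists_of z
  choose idx x hx using hex
  let c : Set (Ring.DirectLimit G fun i j h => ⇑(f i j h)) :=
    ⋃ p ∈ s, (p.coeffs : Set _)
  have hc : c.Countable := hs.biUnion fun p _ => p.coeffs.countable_toSet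
  obtain ⟨i, hi⟩ := hcountable (idx '' c) (hc.image idx)
  letI : Algebra (G i) (Ring.DirectLimit G fun i j h => ⇑(f i j h)) :=
    (Ring.DirectLimit.of G (fun i j h => ⇑(f i j h)) i).toAlgebra
  refine ⟨i, descends_of_coeffs (G i) _ A g hg s hs hspan fun p hp => ?_⟩
  have hmem : p ∈ Set.range (MvPolynomial.map
      (algebraMap (G i) (Ring.DirectLimit G fun i j h => ⇑(f i j h)))) := by
    refine MvPolynomial.mem_range_map_iff_coeffs_subset.2 fun z hz => ?_
    have hzc : z ∈ c := Set.mem_biUnion hp hz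
    have hle : idx z ≤ i := hi _ ⟨z, hzc, rfl⟩
    refine ⟨f (idx z) i hle (x z), ?_⟩
    exact (Ring.DirectLimit.of_f (f := fun i j h => ⇑(f i j h)) hle (x z)).trans (hx z)
  exact hmem
end

section
/- Let A be a commutative ring, let ξ, p ∈ A, let M and M' be A-modules, and let f : M → M' be an A-linear map. Assume that ξ is a nonzerodivisor on M' (ξ·y = 0 implies y = 0 for y ∈ M') and that M'/ξM' has no p-torsion (for y ∈ M', p·y ∈ ξM' implies y ∈ ξM'). For each natural number i define the submodule Fil^i M := f⁻¹(ξ^i·M') of M. Then for every i ≥ 1 and every m ∈ Fil^{i−1}M with p·m ∈ Fil^i M, one has m ∈ Fil^i M. Consequently, Fil^i M ∩ p·Fil^{i−1}M = p·Fil^i M, i.e. the natural map Fil^i M / p·Fil^i M → Fil^{i−1}M / p·Fil^{i−1}M is injective. -/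
open Pointwise

/-- Let `A` be a commutative ring, `ξ, p ∈ A`, and `f : M → M'` an `A`-linear map of
`A`-modules.  Assume `ξ` is a nonzerodivisor on `M'` and `M'/ξM'` has no `p`-torsion.
Define `Fil^i M := f⁻¹(ξ^i • M')`.  Then for every `i ≥ 1` (written as `i + 1`), every
`m ∈ Fil^i M` with `p • m ∈ Fil^{i+1} M` lies in `Fil^{i+1} M`; consequently
`Fil^{i+1} M ⊓ p • Fil^i M = p • Fil^{i+1} M`, i.e. the natural map
`Fil^{i+1} M / p • Fil^{i+1} M → Fil^i M / p • Fil^i M` is injective. -/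
theorem saturated_nygaardian_filtration_mod_p_injective
    {A : Type*} [CommRing A] (ξ p : A)
    {M M' : Type*} [AddCommGroup M] [Module A M] [AddCommGroup M'] [Module A M']
    (f : M →ₗ[A] M')
    (hreg : ∀ y : M', ξ • y = 0 → y = 0)
    (htf : ∀ y : M', (∃ z : M', p • y = ξ • z) → ∃ z : M', y = ξ • z)
    (Fil : ℕ → Submodule A M)
    (hFil : ∀ (i : ℕ) (m : M), m ∈ Fil i ↔ ∃ y : M', f m = ξ ^ i • y) :
    (∀ (i : ℕ), ∀ m ∈ Fil i, p • m ∈ Fil (i + 1) → m ∈ Fil (i + 1)) ∧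
    (∀ i : ℕ, Fil (i + 1) ⊓ p • Fil i = p • Fil (i + 1)) := by
  have hpow : ∀ (i : ℕ) (y : M'), ξ ^ i • y = 0 → y = 0 := by
    intro i
    induction i with
    | zero => intro y hy; simpa using hy
    | succ k ih =>
      intro y hy
      rw [pow_succ, mul_smul] at hy
      exact hreg y (ih _ hy)
  have key : ∀ (i : ℕ), ∀ m ∈ Fil i, p • m ∈ Fil (i + 1) → m ∈ Fil (i + 1) := by
    intro i m hm hpm
    obtain ⟨y, hy⟩ := (hFil i m).1 hm
    obtain ⟨z, hz⟩ := (hFil (i + 1) _).1 hpm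
    have h : p • y = ξ • z := by
      apply sub_eq_zero.1
      apply hpow i
      rw [smul_sub, smul_comm, ← hy, ← map_smul, hz, pow_succ, mul_smul, sub_self]
    obtain ⟨w, hw⟩ := htf y ⟨z, h⟩
    exact (hFil (i + 1) m).2 ⟨w, by rw [hy, hw, pow_succ, mul_smul]⟩
  refine ⟨key, fun i => le_antisymm ?_ ?_⟩
  · rintro x ⟨hx, hx'⟩
    obtain ⟨m, hm, rfl⟩ := (Submodule.mem_smul_pointwise_iff_exists _ _ _).1 hx'
    exact Submodule.smul_mem_pointwise_smul _ _ _ (key i m hm hx)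
  · intro x hx
    obtain ⟨m, hm, rfl⟩ := (Submodule.mem_smul_pointwise_iff_exists _ _ _).1 hx
    refine ⟨Submodule.smul_mem _ _ hm, Submodule.smul_mem_pointwise_smul _ _ _ ?_⟩
    obtain ⟨y, hy⟩ := (hFil (i + 1) m).1 hm
    exact (hFil i m).2 ⟨ξ • y, by rw [hy, pow_succ, mul_smul]⟩
end
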